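/- arXiv:math/0512053 — 2 statements merged into one kernel-verified Lean document; each statement's English description precedes it below -/
import Mathlib

section
/- There exists a function g : ℝ → ℝ which is real-analytic, odd, 2π-periodic with minimal period 2π, not identically zero, and satisfies for all t the equation g''(t) + A(g)·(3⟨g²⟩ g(t) + g(t)³) = 0, where A(g) := ⟨g⁴⟩ + 3⟨g²⟩². Moreover g is non-degenerate in the space of odd 2π-periodic functions: every C², odd, 2π-periodic function h : ℝ → ℝ satisfying for all t the linearized equation h''(t) + 3A(g)(⟨g²⟩ + g(t)²) h(t) + 6 A(g) g(t) ⟨g h⟩ + 4(⟨g³ h⟩ + 3⟨g²⟩⟨g h⟩)(3⟨g²⟩ g(t) + g(t)³) = 0 is identically zero. -/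
open Real

/-- Average of a function over one period `[0, 2π]`. -/
noncomputable def avg (f : ℝ → ℝ) : ℝ := (1 / (2 * π)) * ∫ t in (0:ℝ)..(2 * π), f t

/-!
Take `g t = V sn(Ω t)`, where `sn` is the Jacobi elliptic sine of imaginary modulus `i k` and `Ω`
normalizes the period to `2π`. It solves a Duffing equation `g'' + α g + β g³ = 0`. The relation
`α = 3 β ⟨g²⟩` does not depend on `V` and holds for some `k` by the intermediate value theorem; as
`A` is homogeneous of degree four, `V` can then be chosen with `β = A(g)`.

For nondegeneracy, write `L u = u'' + (α + 3 β g²) u`. Since `L g = 2 β g³`, subtracting a multiple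
of `g` from `h` turns the linearized equation into `L h = -6 β ⟨g h⟩ g`. The operator `L` maps two
explicit, nonperiodic functions to multiples of `g`, namely the scaling variation `g + t g'` and
`β g³ + 2 α g - β g' ∫ g²`. Integrating their Wronskians with `h` over a period gives two linear
relations between `⟨g h⟩` and `h'(0) g'(0)` with nonzero determinant. Hence `⟨g h⟩ = 0` and
`h'(0) = 0`, so `h = 0` by uniqueness for the initial value problem. The subtracted multiple of `g`
then vanishes because of the homogeneity of `A`.
-/

open Filter Topology

section AnalyticPrimitive

variable {𝕜 E : Type*} [RCLike 𝕜] [NormedAddCommGroup E] [NormedSpace 𝕜 E]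

theorem norm_pow_smul_coeff_le_of_mem_ball (p : FormalMultilinearSeries 𝕜 𝕜 E) {x z : 𝕜} {ρ : ℝ}
    (hz : z ∈ Metric.ball x ρ) (n : ℕ) : ‖(z - x) ^ n • p.coeff n‖ ≤ ‖p n‖ * ρ ^ n := by
  rw [norm_smul, norm_pow, mul_comm, p.norm_apply_eq_norm_coef]
  gcongr
  exact (mem_ball_iff_norm.1 hz).le

theorem hasDerivAt_sub_smul_pow_smul_inv_smul (a : E) (x z : 𝕜) (n : ℕ) :
    HasDerivAt (fun w => (w - x) • (w - x) ^ n • (n + 1 : 𝕜)⁻¹ • a) ((z - x) ^ n • a) z := by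
  have n_ne : (n + 1 : 𝕜) ≠ 0 := n.cast_add_one_ne_zero
  have := (((hasDerivAt_id z).sub_const x).pow (n + 1)).smul_const ((n + 1 : 𝕜)⁻¹ • a)
  refine (this.congr_deriv ?_).congr_of_eventuallyEq (.of_forall fun w => ?_)
  · simp only [smul_smul, id, Nat.cast_add_one, Nat.add_sub_cancel]
    congr 1
    field_simp
  · simp [smul_smul, pow_succ', mul_assoc]

theorem exists_analyticAt_hasDerivAt [CompleteSpace E] {f : 𝕜 → E} {x : 𝕜}
    (hf : AnalyticAt 𝕜 f x) :
    ∃ F : 𝕜 → E, AnalyticAt 𝕜 F x ∧ ∀ᶠ z in 𝓝 x, HasDerivAt F (f z) z := by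
  obtain ⟨p, r, hp⟩ := hf
  obtain ⟨ρ, ρ_pos, ρ_lt⟩ := ENNReal.lt_iff_exists_nnreal_btwn.1 hp.r_pos
  replace ρ_pos : 0 < (ρ : ℝ) := by exact_mod_cast ρ_pos
  have ball_mem_nhds := Metric.ball_mem_nhds x ρ_pos
  have summable_norm := p.summable_norm_mul_pow (ρ_lt.trans_le hp.r_le)
  let q : FormalMultilinearSeries 𝕜 𝕜 E := fun n => (n + 1 : 𝕜)⁻¹ • p n
  have summable_q : ∀ z ∈ Metric.ball x ρ, Summable fun n => (z - x) ^ n • q.coeff n := by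
    refine fun z hz => .of_norm_bounded summable_norm fun n =>
      le_trans ?_ (norm_pow_smul_coeff_le_of_mem_ball p hz n)
    change ‖(z - x) ^ n • (n + 1 : 𝕜)⁻¹ • p.coeff n‖ ≤ _
    rw [smul_comm, norm_smul, norm_inv, ← Nat.cast_add_one, RCLike.norm_natCast]
    exact mul_le_of_le_one_left (norm_nonneg _) (inv_le_one_of_one_le₀ (by simp))
  let R : 𝕜 → E := fun z => ∑' n, (z - x) ^ n • q.coeff n
  have R_analytic : AnalyticAt 𝕜 R x := by
    refine (hasFPowerSeriesAt_iff'.2 ?_).analyticAt (p := q)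
    filter_upwards [ball_mem_nhds] with z hz using (summable_q z hz).hasSum
  refine ⟨fun z => (z - x) • R z, (analyticAt_id.sub analyticAt_const).smul R_analytic, ?_⟩
  filter_upwards [ball_mem_nhds] with z hz
  have hasDerivAt_tsum := hasDerivAt_tsum_of_isPreconnected summable_norm Metric.isOpen_ball
    (convex_ball x (ρ : ℝ)).isPreconnected
    (fun n w _ => hasDerivAt_sub_smul_pow_smul_inv_smul (p.coeff n) x w n)
    (fun n w hw => norm_pow_smul_coeff_le_of_mem_ball p hw n) (Metric.mem_ball_self ρ_pos)
    ((summable_q x (Metric.mem_ball_self ρ_pos)).const_smul (x - x)) hz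
  have tsum_coeff : ∑' n, (z - x) ^ n • p.coeff n = f z := by
    have z_mem : z ∈ Metric.eball x r :=
      Metric.eball_subset_eball ρ_lt.le (by rwa [Metric.eball_coe])
    simpa using (hp.hasSum_sub z_mem).tsum_eq
  rw [tsum_coeff] at hasDerivAt_tsum
  refine hasDerivAt_tsum.congr_of_eventuallyEq ?_
  filter_upwards [Metric.isOpen_ball.mem_nhds hz] with w hw
  exact ((summable_q w hw).tsum_const_smul _).symm

theorem analyticAt_of_eventually_hasDerivAt [CompleteSpace E] {f F : 𝕜 → E} {x : 𝕜}
    (hf : AnalyticAt 𝕜 f x) (hF : ∀ᶠ z in 𝓝 x, HasDerivAt F (f z) z) : AnalyticAt 𝕜 F x := by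
  obtain ⟨Φ, Φ_analytic, hΦ⟩ := exists_analyticAt_hasDerivAt hf
  obtain ⟨ε, ε_pos, hε⟩ := Metric.eventually_nhds_iff_ball.1 (hF.and hΦ)
  obtain ⟨c, hc⟩ := Metric.isOpen_ball.exists_eq_add_of_deriv_eq
    (convex_ball x ε).isPreconnected
    (fun z hz => (hε z hz).1.differentiableAt.differentiableWithinAt)
    (fun z hz => (hε z hz).2.differentiableAt.differentiableWithinAt)
    (fun z hz => (hε z hz).1.deriv.trans (hε z hz).2.deriv.symm)
  exact (Φ_analytic.add analyticAt_const).congr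
    (hc.symm.eventuallyEq_of_mem (Metric.ball_mem_nhds x ε_pos))

end AnalyticPrimitive

section Average

theorem avg_const_mul (c : ℝ) (f : ℝ → ℝ) : avg (fun t => c * f t) = c * avg f := by
  simp only [avg, intervalIntegral.integral_const_mul]
  ring

theorem avg_sq_const_mul (c : ℝ) (f : ℝ → ℝ) :
    avg (fun t => (c * f t) ^ 2) = c ^ 2 * avg fun t => f t ^ 2 := by
  simp only [mul_pow, avg_const_mul]

theorem avg_add {f g : ℝ → ℝ} (hf : Continuous f) (hg : Continuous g) :
    avg (fun t => f t + g t) = avg f + avg g := by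
  simp only [avg]
  rw [intervalIntegral.integral_add (hf.intervalIntegrable _ _) (hg.intervalIntegrable _ _),
    mul_add]

theorem avg_eq_of_hasDerivAt {F f : ℝ → ℝ} (hF : ∀ t, HasDerivAt F (f t) t) (hf : Continuous f) :
    avg f = (F (2 * π) - F 0) / (2 * π) := by
  rw [avg, intervalIntegral.integral_eq_sub_of_hasDerivAt (fun t _ => hF t)
    (hf.intervalIntegrable _ _)]
  ring

theorem avg_nonneg {f : ℝ → ℝ} (f_nonneg : 0 ≤ f) : 0 ≤ avg f :=
  mul_nonneg (one_div_pos.2 two_pi_pos).le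
    (intervalIntegral.integral_nonneg two_pi_pos.le fun t _ => f_nonneg t)

theorem avg_pos_of_periodic {f : ℝ → ℝ} (f_cont : Continuous f) (f_nonneg : 0 ≤ f)
    (f_periodic : Function.Periodic f (2 * π)) (f_ne : f ≠ 0) : 0 < avg f := by
  obtain ⟨t, ht⟩ := Function.ne_iff.1 f_ne
  obtain ⟨c, c_mem, hc⟩ := f_periodic.exists_mem_Ico₀ two_pi_pos t
  refine mul_pos (one_div_pos.2 two_pi_pos) (intervalIntegral.integral_pos two_pi_pos
    f_cont.continuousOn (fun x _ => f_nonneg x) ⟨c, Set.Ico_subset_Icc_self c_mem, ?_⟩)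
  exact hc ▸ (f_nonneg t).lt_of_ne' ht

end Average

theorem periodic_of_hasDerivAt {f f' : ℝ → ℝ} {c : ℝ} (hf : Function.Periodic f c)
    (hf' : ∀ t, HasDerivAt f (f' t) t) : Function.Periodic f' c := fun t => by
  have := (hf' (t + c)).comp_add_const t c
  rw [hf.funext] at this
  exact this.unique (hf' t)

theorem hasDerivAt_comp_mul_left {f : ℝ → ℝ} {f' c t : ℝ} (hf : HasDerivAt f f' (c * t)) :
    HasDerivAt (fun t => f (c * t)) (c * f') t :=
  (hf.comp t ((hasDerivAt_id t).const_mul c)).congr_deriv (by ring)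

/-- The pair `(u, u')` solves the inhomogeneous Hill equation `u'' + q u = f`, with `u'` the
derivative of `u`. -/
structure IsHillSolution (q f u u' : ℝ → ℝ) : Prop where
  hasDerivAt : ∀ t, HasDerivAt u (u' t) t
  hasDerivAt_deriv : ∀ t, HasDerivAt u' (f t - q t * u t) t

/-- The Wronskian of two functions `u`, `v` with derivatives `u'`, `v'`. -/
def wronskian (u u' v v' : ℝ → ℝ) (t : ℝ) : ℝ := u t * v' t - u' t * v t

namespace IsHillSolution

variable {q f f₁ f₂ u u' v v' : ℝ → ℝ}

theorem continuous (hu : IsHillSolution q f u u') : Continuous u :=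
  continuous_iff_continuousAt.2 fun t => (hu.hasDerivAt t).continuousAt

theorem const_mul (c : ℝ) (hu : IsHillSolution q f u u') :
    IsHillSolution q (fun t => c * f t) (fun t => c * u t) fun t => c * u' t where
  hasDerivAt t := (hu.hasDerivAt t).const_mul c
  hasDerivAt_deriv t := ((hu.hasDerivAt_deriv t).const_mul c).congr_deriv (by ring)

theorem add (hu : IsHillSolution q f₁ u u') (hv : IsHillSolution q f₂ v v') :
    IsHillSolution q (fun t => f₁ t + f₂ t) (fun t => u t + v t) fun t => u' t + v' t where
  hasDerivAt t := (hu.hasDerivAt t).add (hv.hasDerivAt t)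
  hasDerivAt_deriv t :=
    ((hu.hasDerivAt_deriv t).add (hv.hasDerivAt_deriv t)).congr_deriv (by ring)

theorem hasDerivAt_wronskian (hu : IsHillSolution q f₁ u u') (hv : IsHillSolution q f₂ v v')
    (t : ℝ) : HasDerivAt (wronskian u u' v v') (u t * f₂ t - f₁ t * v t) t :=
  (((hu.hasDerivAt t).mul (hv.hasDerivAt_deriv t)).sub
    ((hu.hasDerivAt_deriv t).mul (hv.hasDerivAt t))).congr_deriv (by ring)

theorem eq_zero_of_apply_eq_zero (q_cont : Continuous q) (hu : IsHillSolution q 0 u u') {s : ℝ}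
    (us_zero : u s = 0) (u's_zero : u' s = 0) : u = 0 := by
  funext t
  let I := Set.Ioo (min s t - 1) (max s t + 1)
  let field : ℝ → ℝ × ℝ → ℝ × ℝ := fun r p => (p.2, -q r * p.1)
  obtain ⟨K, hK⟩ := isCompact_Icc.exists_bound_of_continuousOn
    (s := Set.Icc (min s t - 1) (max s t + 1)) q_cont.continuousOn
  have lipschitz : ∀ r ∈ I, LipschitzOnWith (max 1 K.toNNReal) (field r) Set.univ := fun r hr => by
    refine (LipschitzWith.prod_snd.prodMk (.of_dist_le_mul fun p p' => ?_)).lipschitzOnWith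
    rw [← smul_eq_mul, ← smul_eq_mul, dist_smul₀, norm_neg]
    exact mul_le_mul ((hK r (Set.Ioo_subset_Icc_self hr)).trans K.le_coe_toNNReal)
      (le_max_left _ _) dist_nonneg K.toNNReal.coe_nonneg
  have phase_eq : Set.EqOn (fun r => (u r, u' r)) 0 I :=
    ODE_solution_unique_of_mem_Ioo lipschitz (t₀ := s) ⟨by grind, by grind⟩
      (fun r _ => ⟨((hu.hasDerivAt r).prodMk (hu.hasDerivAt_deriv r)).congr_deriv
        (by simp [field]), trivial⟩)
      (fun r _ => ⟨(hasDerivAt_const r _).congr_deriv (by simp [field]; rfl), trivial⟩)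
      (by simp [us_zero, u's_zero])
  exact congrArg Prod.fst (phase_eq ⟨by grind, by grind⟩)

/-- Integrate the derivative of the Wronskian over a period. -/
theorem avg_mul_sub_avg_mul {y : ℝ → ℝ} {a c : ℝ} (y_cont : Continuous y)
    (hu : IsHillSolution q (fun t => a * y t) u u') (hv : IsHillSolution q (fun t => c * y t) v v')
    (u_zero : u 0 = 0) (u_periodic : Function.Periodic u (2 * π)) :
    c * avg (fun t => y t * u t) - a * avg (fun t => y t * v t)
      = -u' 0 * (v (2 * π) - v 0) / (2 * π) := by
  have u'_periodic := periodic_of_hasDerivAt u_periodic hu.hasDerivAt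
  have u_cont := hu.continuous
  have v_cont := hv.continuous
  have u_two_pi : u (2 * π) = 0 := by rw [u_periodic.eq, u_zero]
  calc c * avg (fun t => y t * u t) - a * avg (fun t => y t * v t)
      = avg fun t => c * (y t * u t) + -a * (y t * v t) := by
        rw [avg_add (by fun_prop) (by fun_prop), avg_const_mul, avg_const_mul]; ring
    _ = (wronskian u u' v v' (2 * π) - wronskian u u' v v' 0) / (2 * π) :=
        avg_eq_of_hasDerivAt (fun t => (hu.hasDerivAt_wronskian hv t).congr_deriv (by ring))
          (by fun_prop)
    _ = -u' 0 * (v (2 * π) - v 0) / (2 * π) := by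
        simp only [wronskian, u_zero, u_two_pi, u'_periodic.eq]; ring

end IsHillSolution

/-- The pair `(y, y')` solves the Duffing equation `y'' + α y + β y³ = 0`, with `y'` the derivative
of `y`. -/
structure IsDuffingSolution (α β : ℝ) (y y' : ℝ → ℝ) : Prop where
  hasDerivAt : ∀ t, HasDerivAt y (y' t) t
  hasDerivAt_deriv : ∀ t, HasDerivAt y' (-(α * y t + β * y t ^ 3)) t

/-- Twice the conserved energy of the Duffing equation `y'' + α y + β y³ = 0`, as a function of
position `x` and velocity `p`. -/
noncomputable def duffingEnergy (α β x p : ℝ) : ℝ := p ^ 2 + α * x ^ 2 + β / 2 * x ^ 4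

/-- The potential `α + 3 β y²` of the linearization of the Duffing equation at `y`. -/
def duffingPotential (α β : ℝ) (y : ℝ → ℝ) (t : ℝ) : ℝ := α + 3 * β * y t ^ 2

/-- The derivative at `l = 1` of the rescaled solutions `l * y (l * t)`. -/
def scalingVariation (y y' : ℝ → ℝ) (t : ℝ) : ℝ := y t + t * y' t

/-- The linearized Duffing operator maps `y' * ∫ y²` to a polynomial in `y`, by conservation of
energy; the polynomial part of this function cancels it up to a multiple of `y`. -/
noncomputable def energyVariation (α β : ℝ) (y y' : ℝ → ℝ) (t : ℝ) : ℝ :=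
  β * y t ^ 3 + 2 * α * y t - β * (y' t * ∫ s in (0:ℝ)..t, y s ^ 2)

namespace IsDuffingSolution

variable {α β : ℝ} {y y' : ℝ → ℝ}

theorem continuous (hy : IsDuffingSolution α β y y') : Continuous y :=
  continuous_iff_continuousAt.2 fun t => (hy.hasDerivAt t).continuousAt

theorem continuous_deriv (hy : IsDuffingSolution α β y y') : Continuous y' :=
  continuous_iff_continuousAt.2 fun t => (hy.hasDerivAt_deriv t).continuousAt

theorem deriv_deriv_add (hy : IsDuffingSolution α β y y') (t : ℝ) :
    deriv (deriv y) t + (α * y t + β * y t ^ 3) = 0 := by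
  rw [show deriv y = y' from funext fun t => (hy.hasDerivAt t).deriv,
    (hy.hasDerivAt_deriv t).deriv, neg_add_cancel]

theorem rescale (hy : IsDuffingSolution α β y y') {V : ℝ} (V_ne : V ≠ 0) (Ω : ℝ) :
    IsDuffingSolution (Ω ^ 2 * α) (Ω ^ 2 * β / V ^ 2) (fun t => V * y (Ω * t))
      fun t => V * Ω * y' (Ω * t) where
  hasDerivAt t :=
    ((hasDerivAt_comp_mul_left (hy.hasDerivAt (Ω * t))).const_mul V).congr_deriv (by ring)
  hasDerivAt_deriv t :=
    ((hasDerivAt_comp_mul_left (hy.hasDerivAt_deriv (Ω * t))).const_mul (V * Ω)).congr_deriv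
      (by field)

theorem hasDerivAt_integral_sq (hy : IsDuffingSolution α β y y') (t : ℝ) :
    HasDerivAt (fun t => ∫ s in (0:ℝ)..t, y s ^ 2) (y t ^ 2) t :=
  (hy.continuous.pow 2).integral_hasStrictDerivAt 0 t |>.hasDerivAt

theorem duffingEnergy_eq (hy : IsDuffingSolution α β y y') (s t : ℝ) :
    duffingEnergy α β (y s) (y' s) = duffingEnergy α β (y t) (y' t) := by
  have hasDerivAt_energy : ∀ t, HasDerivAt (fun t => duffingEnergy α β (y t) (y' t)) 0 t :=
    fun t => ((((hy.hasDerivAt_deriv t).pow 2).add (((hy.hasDerivAt t).pow 2).const_mul α)).add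
      (((hy.hasDerivAt t).pow 4).const_mul (β / 2))).congr_deriv (by push_cast; ring)
  exact is_const_of_deriv_eq_zero (fun t => (hasDerivAt_energy t).differentiableAt)
    (fun t => (hasDerivAt_energy t).deriv) s t

theorem deriv_ne_zero (hy : IsDuffingSolution α β y y') (α_nonneg : 0 ≤ α) (β_pos : 0 < β)
    (y_ne : y ≠ 0) {s : ℝ} (ys_zero : y s = 0) : y' s ≠ 0 := by
  obtain ⟨t, ht⟩ := Function.ne_iff.1 y_ne
  have energy_pos : 0 < duffingEnergy α β (y t) (y' t) := by
    have : 0 < y t ^ 4 := by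
      have : y t ≠ 0 := ht
      positivity
    unfold duffingEnergy
    positivity
  rw [hy.duffingEnergy_eq t s] at energy_pos
  rintro y's_zero
  simp [duffingEnergy, ys_zero, y's_zero] at energy_pos

theorem isHillSolution (hy : IsDuffingSolution α β y y') :
    IsHillSolution (duffingPotential α β y) (fun t => 2 * β * y t ^ 3) y y' where
  hasDerivAt := hy.hasDerivAt
  hasDerivAt_deriv t := (hy.hasDerivAt_deriv t).congr_deriv (by unfold duffingPotential; ring)

theorem isHillSolution_scalingVariation (hy : IsDuffingSolution α β y y') :
    IsHillSolution (duffingPotential α β y) (fun t => -2 * α * y t) (scalingVariation y y')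
      fun t => 2 * y' t - t * (α * y t + β * y t ^ 3) where
  hasDerivAt t := ((hy.hasDerivAt t).add
    ((hasDerivAt_id t).mul (hy.hasDerivAt_deriv t))).congr_deriv (by simp only [id]; ring)
  hasDerivAt_deriv t :=
    (((hy.hasDerivAt_deriv t).const_mul 2).sub ((hasDerivAt_id t).mul
      (((hy.hasDerivAt t).const_mul α).add (((hy.hasDerivAt t).pow 3).const_mul β)))).congr_deriv
      (by simp [duffingPotential, scalingVariation]; ring)

theorem isHillSolution_energyVariation (hy : IsDuffingSolution α β y y') (s : ℝ) :
    IsHillSolution (duffingPotential α β y)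
      (fun t => 4 * β * duffingEnergy α β (y s) (y' s) * y t) (energyVariation α β y y')
      fun t => 2 * β * y t ^ 2 * y' t + 2 * α * y' t
        + β * ((α * y t + β * y t ^ 3) * ∫ s in (0:ℝ)..t, y s ^ 2) where
  hasDerivAt t :=
    (((((hy.hasDerivAt t).pow 3).const_mul β).add ((hy.hasDerivAt t).const_mul (2 * α))).sub
      (((hy.hasDerivAt_deriv t).mul (hy.hasDerivAt_integral_sq t)).const_mul β)).congr_deriv
      (by push_cast; ring)
  hasDerivAt_deriv t := by
    refine ((((((hy.hasDerivAt t).pow 2).const_mul (2 * β)).mul (hy.hasDerivAt_deriv t)).add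
      ((hy.hasDerivAt_deriv t).const_mul (2 * α))).add
      (((((hy.hasDerivAt t).const_mul α).add (((hy.hasDerivAt t).pow 3).const_mul β)).mul
        (hy.hasDerivAt_integral_sq t)).const_mul β)).congr_deriv ?_
    rw [hy.duffingEnergy_eq s t]
    simp only [duffingPotential, energyVariation, duffingEnergy, Pi.add_apply, Pi.pow_apply]
    push_cast
    ring

theorem avg_mul_scalingVariation (hy : IsDuffingSolution α β y y') (y_two_pi : y (2 * π) = 0) :
    avg (fun t => y t * scalingVariation y y' t) = avg (fun t => y t ^ 2) / 2 := by
  have y_cont := hy.continuous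
  have y'_cont := hy.continuous_deriv
  have avg_deriv : avg (fun t => y t * scalingVariation y y' t + -(1 / 2) * y t ^ 2) = 0 := by
    rw [avg_eq_of_hasDerivAt (F := fun t => 1 / 2 * (t * y t ^ 2))
      (fun t => (((hasDerivAt_id t).mul ((hy.hasDerivAt t).pow 2)).const_mul (1 / 2)).congr_deriv
        (by simp [scalingVariation]; ring)) (by unfold scalingVariation; fun_prop)]
    simp [y_two_pi]
  rw [avg_add (by unfold scalingVariation; fun_prop) (by fun_prop), avg_const_mul] at avg_deriv
  linarith

theorem avg_mul_energyVariation (hy : IsDuffingSolution α β y y') (y_two_pi : y (2 * π) = 0) :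
    avg (fun t => y t * energyVariation α β y y' t)
      = 3 / 2 * β * avg (fun t => y t ^ 4) + 2 * α * avg (fun t => y t ^ 2) := by
  have y_cont := hy.continuous
  have v_cont := (hy.isHillSolution_energyVariation 0).continuous
  have avg_deriv : avg (fun t => (y t * energyVariation α β y y' t + -(3 / 2 * β) * y t ^ 4)
      + -(2 * α) * y t ^ 2) = 0 := by
    rw [avg_eq_of_hasDerivAt (F := fun t => -(β / 2) * (y t ^ 2 * ∫ s in (0:ℝ)..t, y s ^ 2))
      (fun t => ((((hy.hasDerivAt t).pow 2).mul (hy.hasDerivAt_integral_sq t)).const_mul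
        (-(β / 2))).congr_deriv (by simp [energyVariation]; ring)) (by fun_prop)]
    simp [y_two_pi]
  rw [avg_add (by fun_prop) (by fun_prop), avg_add (by fun_prop) (by fun_prop), avg_const_mul,
    avg_const_mul] at avg_deriv
  linarith

variable {c : ℝ} {h h' : ℝ → ℝ}

theorem scalingVariation_solvability (hy : IsDuffingSolution α β y y') (y_zero : y 0 = 0)
    (y_periodic : Function.Periodic y (2 * π))
    (hh : IsHillSolution (duffingPotential α β y) (fun t => c * y t) h h') (h_zero : h 0 = 0)
    (h_periodic : Function.Periodic h (2 * π)) :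
    2 * α * avg (fun t => y t * h t) + c * (avg (fun t => y t ^ 2) / 2) = h' 0 * y' 0 := by
  have y_two_pi : y (2 * π) = 0 := by rw [y_periodic.eq, y_zero]
  have y'_periodic := periodic_of_hasDerivAt y_periodic hy.hasDerivAt
  have solvability := hh.avg_mul_sub_avg_mul hy.continuous hy.isHillSolution_scalingVariation
    h_zero h_periodic
  rw [hy.avg_mul_scalingVariation y_two_pi] at solvability
  simp only [scalingVariation, y_two_pi, y'_periodic.eq, y_zero] at solvability
  field_simp at solvability
  refine mul_right_cancel₀ pi_ne_zero ?_
  linear_combination -solvability / 2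

theorem energyVariation_solvability (hy : IsDuffingSolution α β y y') (y_zero : y 0 = 0)
    (y_periodic : Function.Periodic y (2 * π))
    (hh : IsHillSolution (duffingPotential α β y) (fun t => c * y t) h h') (h_zero : h 0 = 0)
    (h_periodic : Function.Periodic h (2 * π)) :
    4 * β * y' 0 ^ 2 * avg (fun t => y t * h t)
      - c * (3 / 2 * β * avg (fun t => y t ^ 4) + 2 * α * avg (fun t => y t ^ 2))
      = β * avg (fun t => y t ^ 2) * (h' 0 * y' 0) := by
  have y_two_pi : y (2 * π) = 0 := by rw [y_periodic.eq, y_zero]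
  have y'_periodic := periodic_of_hasDerivAt y_periodic hy.hasDerivAt
  have integral_sq : ∫ s in (0:ℝ)..(2 * π), y s ^ 2 = 2 * π * avg (fun t => y t ^ 2) := by
    rw [avg]; field_simp
  have solvability := hh.avg_mul_sub_avg_mul hy.continuous (hy.isHillSolution_energyVariation 0)
    h_zero h_periodic
  rw [hy.avg_mul_energyVariation y_two_pi] at solvability
  simp only [duffingEnergy, energyVariation, y_two_pi, y'_periodic.eq, y_zero, integral_sq,
    intervalIntegral.integral_same] at solvability
  field_simp at solvability
  refine mul_right_cancel₀ pi_ne_zero ?_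
  linear_combination solvability / 2

theorem avg_mul_eq_zero (hy : IsDuffingSolution α β y y') (α_nonneg : 0 ≤ α) (β_pos : 0 < β)
    (y_zero : y 0 = 0) (y_ne : y ≠ 0) (y_periodic : Function.Periodic y (2 * π)) (hc : β ≤ c)
    (hh : IsHillSolution (duffingPotential α β y)
      (fun t => -c * avg (fun s => y s * h s) * y t) h h')
    (h_zero : h 0 = 0) (h_periodic : Function.Periodic h (2 * π)) :
    avg (fun t => y t * h t) = 0 := by
  have scaling := hy.scalingVariation_solvability y_zero y_periodic hh h_zero h_periodic
  have energy := hy.energyVariation_solvability y_zero y_periodic hh h_zero h_periodic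
  have y'_ne : y' 0 ≠ 0 := hy.deriv_ne_zero α_nonneg β_pos y_ne y_zero
  have b_nonneg : 0 ≤ avg fun t => y t ^ 2 := avg_nonneg fun t => sq_nonneg (y t)
  have q_nonneg : 0 ≤ avg fun t => y t ^ 4 := avg_nonneg fun t => by positivity
  set b := avg fun t => y t ^ 2
  set q := avg fun t => y t ^ 4
  have c_pos : 0 < c := β_pos.trans_le hc
  have gap_nonneg : 0 ≤ 2 * α * b * (c - β) := mul_nonneg (by positivity) (sub_nonneg.2 hc)
  have coeff_pos : 0 < 4 * β * y' 0 ^ 2 + (3 / 2 * c * β * q + 2 * α * b * (c - β)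
      + c * β * b ^ 2 / 2) :=
    add_pos_of_pos_of_nonneg (by positivity)
      (add_nonneg (add_nonneg (by positivity) gap_nonneg) (by positivity))
  refine (mul_eq_zero.1 ?_).resolve_left coeff_pos.ne'
  linear_combination energy - β * b * scaling

theorem eq_zero_of_isHillSolution_avg_mul (hy : IsDuffingSolution α β y y') (α_nonneg : 0 ≤ α)
    (β_pos : 0 < β) (y_zero : y 0 = 0) (y_ne : y ≠ 0) (y_periodic : Function.Periodic y (2 * π))
    (hc : β ≤ c)
    (hh : IsHillSolution (duffingPotential α β y)
      (fun t => -c * avg (fun s => y s * h s) * y t) h h')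
    (h_zero : h 0 = 0) (h_periodic : Function.Periodic h (2 * π)) : h = 0 := by
  have avg_zero := hy.avg_mul_eq_zero α_nonneg β_pos y_zero y_ne y_periodic hc hh h_zero h_periodic
  have scaling := hy.scalingVariation_solvability y_zero y_periodic hh h_zero h_periodic
  simp only [avg_zero, mul_zero, zero_mul, add_zero] at hh scaling
  have h'_zero : h' 0 = 0 :=
    (mul_eq_zero.1 scaling.symm).resolve_right (hy.deriv_ne_zero α_nonneg β_pos y_ne y_zero)
  have y_cont := hy.continuous
  exact hh.eq_zero_of_apply_eq_zero (by unfold duffingPotential; fun_prop) h_zero h'_zero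

end IsDuffingSolution

/-- The quartic functional `A(g) = ⟨g⁴⟩ + 3 ⟨g²⟩²`. -/
noncomputable def nonlocalCoeff (g : ℝ → ℝ) : ℝ :=
  avg (fun s => g s ^ 4) + 3 * avg (fun s => g s ^ 2) ^ 2

theorem nonlocalCoeff_pos {g : ℝ → ℝ} (g_cont : Continuous g)
    (g_periodic : Function.Periodic g (2 * π)) (g_ne : g ≠ 0) : 0 < nonlocalCoeff g := by
  have avg_pow_four_pos : 0 < avg fun s => g s ^ 4 := by
    refine avg_pos_of_periodic (by fun_prop) (fun t => by positivity)
      (fun t => by rw [g_periodic t]) fun pow_zero => g_ne ?_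
    exact funext fun t => pow_eq_zero_iff four_ne_zero |>.1 (congrFun pow_zero t)
  unfold nonlocalCoeff
  positivity

theorem nonlocalCoeff_const_mul (c : ℝ) (f : ℝ → ℝ) :
    nonlocalCoeff (fun t => c * f t) = c ^ 4 * nonlocalCoeff f := by
  simp only [nonlocalCoeff, mul_pow, avg_const_mul]
  ring

theorem IsDuffingSolution.exists_const_mul_nonlocal {α β : ℝ} {y y' : ℝ → ℝ}
    (hy : IsDuffingSolution α β y y') (β_pos : 0 < β) (hα : α = 3 * β * avg fun t => y t ^ 2)
    (y_periodic : Function.Periodic y (2 * π)) (y_ne : y ≠ 0) :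
    ∃ V : ℝ, V ≠ 0 ∧ IsDuffingSolution
      (3 * nonlocalCoeff (fun t => V * y t) * avg fun t => (V * y t) ^ 2)
      (nonlocalCoeff fun t => V * y t) (fun t => V * y t) fun t => V * y' t := by
  have A_pos : 0 < nonlocalCoeff y := nonlocalCoeff_pos hy.continuous y_periodic y_ne
  obtain ⟨V, V_pos, hV⟩ : ∃ V : ℝ, 0 < V ∧ V ^ 6 = β / nonlocalCoeff y :=
    ⟨(β / nonlocalCoeff y) ^ ((6 : ℕ) : ℝ)⁻¹, by positivity,
      rpow_inv_natCast_pow (by positivity) (by norm_num)⟩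
  rw [eq_div_iff A_pos.ne'] at hV
  refine ⟨V, V_pos.ne', ?_⟩
  convert! hy.rescale V_pos.ne' 1 using 1
  · rw [nonlocalCoeff_const_mul, avg_sq_const_mul, hα, ← hV]
    ring
  · rw [nonlocalCoeff_const_mul, ← hV]
    field
  all_goals simp

/-- The nonlocal terms of the linearization of `g'' + A(g) (3 ⟨g²⟩ g + g³) = 0` in the direction
`h`, moved to the right-hand side. -/
noncomputable def nonlocalForcing (g h : ℝ → ℝ) (t : ℝ) : ℝ :=
  -(6 * nonlocalCoeff g * g t * avg (fun s => g s * h s)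
    + 4 * (avg (fun s => g s ^ 3 * h s) + 3 * avg (fun s => g s ^ 2) * avg (fun s => g s * h s))
      * (3 * avg (fun s => g s ^ 2) * g t + g t ^ 3))

section NonlocalLinearization

variable {g g' h h' : ℝ → ℝ}

theorem eq_const_mul_of_nonlocalForcing
    (hg : IsDuffingSolution (3 * nonlocalCoeff g * avg fun s => g s ^ 2) (nonlocalCoeff g) g g')
    (g_zero : g 0 = 0) (g_ne : g ≠ 0) (g_periodic : Function.Periodic g (2 * π))
    (hh : IsHillSolution
      (duffingPotential (3 * nonlocalCoeff g * avg fun s => g s ^ 2) (nonlocalCoeff g) g)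
      (nonlocalForcing g h) h h')
    (h_zero : h 0 = 0) (h_periodic : Function.Periodic h (2 * π)) {κ : ℝ}
    (hκ : nonlocalCoeff g * κ = -2 * (avg (fun s => g s ^ 3 * h s)
      + 3 * avg (fun s => g s ^ 2) * avg (fun s => g s * h s))) (t : ℝ) :
    h t = κ * g t := by
  have g_cont := hg.continuous
  have h_cont := hh.continuous
  have A_pos : 0 < nonlocalCoeff g := nonlocalCoeff_pos g_cont g_periodic g_ne
  have b_nonneg : 0 ≤ avg fun s => g s ^ 2 := avg_nonneg fun t => sq_nonneg (g t)
  have avg_mul_sub : avg (fun s => g s * (h s + -κ * g s))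
      = avg (fun s => g s * h s) + -κ * avg fun s => g s ^ 2 := by
    rw [← avg_const_mul, ← avg_add (by fun_prop) (by fun_prop)]
    congr! 2 with s
    ring
  have hill_sub : IsHillSolution
      (duffingPotential (3 * nonlocalCoeff g * avg fun s => g s ^ 2) (nonlocalCoeff g) g)
      (fun t => -(6 * nonlocalCoeff g) * avg (fun s => g s * (h s + -κ * g s)) * g t)
      (fun t => h t + -κ * g t) fun t => h' t + -κ * g' t := by
    rw [avg_mul_sub]
    convert! hh.add (hg.isHillSolution.const_mul (-κ)) using 2 with t
    unfold nonlocalForcing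
    linear_combination 2 * (3 * (avg fun s => g s ^ 2) * g t + g t ^ 3) * hκ
  have sub_eq_zero := hg.eq_zero_of_isHillSolution_avg_mul (by positivity) A_pos g_zero g_ne
    g_periodic (by linarith) hill_sub (by simp [h_zero, g_zero])
    (fun t => by rw [h_periodic t, g_periodic t])
  have : h t + -κ * g t = 0 := congrFun sub_eq_zero t
  linarith

theorem eq_zero_of_nonlocalForcing
    (hg : IsDuffingSolution (3 * nonlocalCoeff g * avg fun s => g s ^ 2) (nonlocalCoeff g) g g')
    (g_zero : g 0 = 0) (g_ne : g ≠ 0) (g_periodic : Function.Periodic g (2 * π))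
    (hh : IsHillSolution
      (duffingPotential (3 * nonlocalCoeff g * avg fun s => g s ^ 2) (nonlocalCoeff g) g)
      (nonlocalForcing g h) h h')
    (h_zero : h 0 = 0) (h_periodic : Function.Periodic h (2 * π)) : h = 0 := by
  have A_ne := (nonlocalCoeff_pos hg.continuous g_periodic g_ne).ne'
  obtain ⟨κ, hκ⟩ : ∃ κ, nonlocalCoeff g * κ = -2 * (avg (fun s => g s ^ 3 * h s)
      + 3 * avg (fun s => g s ^ 2) * avg (fun s => g s * h s)) := ⟨_, mul_div_cancel₀ _ A_ne⟩
  have h_eq := eq_const_mul_of_nonlocalForcing hg g_zero g_ne g_periodic hh h_zero h_periodic hκ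
  have avg_mul_h : avg (fun s => g s * h s) = κ * avg fun s => g s ^ 2 := by
    rw [← avg_const_mul]
    congr! 2 with s
    rw [h_eq]; ring
  have avg_pow_three_mul_h : avg (fun s => g s ^ 3 * h s) = κ * avg fun s => g s ^ 4 := by
    rw [← avg_const_mul]
    congr! 2 with s
    rw [h_eq]; ring
  have κ_zero : κ = 0 := by
    refine (mul_eq_zero.1 ?_).resolve_left A_ne
    rw [avg_mul_h, avg_pow_three_mul_h, nonlocalCoeff] at hκ
    rw [nonlocalCoeff]
    linear_combination hκ / 3
  exact funext fun t => by simp [h_eq, κ_zero]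

end NonlocalLinearization

/-- Jacobi's delta amplitude for the imaginary modulus `i k`. -/
noncomputable def ellipticDelta (k θ : ℝ) : ℝ := √(1 + k ^ 2 * sin θ ^ 2)

/-- The incomplete elliptic integral of the first kind for the imaginary modulus `i k`. -/
noncomputable def ellipticF (k x : ℝ) : ℝ := ∫ θ in (0:ℝ)..x, (ellipticDelta k θ)⁻¹

section EllipticIntegral

variable (k : ℝ)

theorem ellipticDelta_pos (θ : ℝ) : 0 < ellipticDelta k θ := by
  unfold ellipticDelta
  positivity

theorem ellipticDelta_sq (θ : ℝ) : ellipticDelta k θ ^ 2 = 1 + k ^ 2 * sin θ ^ 2 :=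
  sq_sqrt (by positivity)

theorem continuous_uncurry_inv_ellipticDelta :
    Continuous fun p : ℝ × ℝ => (ellipticDelta p.1 p.2)⁻¹ :=
  Continuous.inv₀ (by unfold ellipticDelta; fun_prop) fun p => (ellipticDelta_pos p.1 p.2).ne'

theorem continuous_inv_ellipticDelta : Continuous fun θ => (ellipticDelta k θ)⁻¹ :=
  continuous_uncurry_inv_ellipticDelta.comp (.prodMk_right k)

theorem analyticAt_ellipticDelta (θ : ℝ) : AnalyticAt ℝ (ellipticDelta k) θ := by
  have radicand_ne : 1 + k ^ 2 * sin θ ^ 2 ≠ 0 := by positivity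
  exact ((contDiffAt_const.add (contDiffAt_const.mul (contDiff_sin.contDiffAt.pow 2))).sqrt
    radicand_ne).analyticAt

theorem hasDerivAt_ellipticDelta (θ : ℝ) :
    HasDerivAt (ellipticDelta k) (k ^ 2 * sin θ * cos θ / ellipticDelta k θ) θ := by
  have radicand_ne : 1 + k ^ 2 * sin θ ^ 2 ≠ 0 := by positivity
  refine (((((hasDerivAt_sin θ).pow 2).const_mul (k ^ 2)).const_add 1).sqrt
    radicand_ne).congr_deriv ?_
  rw [Pi.pow_apply, ellipticDelta]
  field

theorem ellipticDelta_neg (θ : ℝ) : ellipticDelta k (-θ) = ellipticDelta k θ := by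
  simp [ellipticDelta]

theorem inv_ellipticDelta_periodic :
    Function.Periodic (fun θ => (ellipticDelta k θ)⁻¹) (2 * π) := fun θ => by
  simp only [ellipticDelta, sin_add_two_pi]

theorem intervalIntegrable_inv_ellipticDelta (a b : ℝ) :
    IntervalIntegrable (fun θ => (ellipticDelta k θ)⁻¹) MeasureTheory.volume a b :=
  (continuous_inv_ellipticDelta k).intervalIntegrable a b

theorem hasDerivAt_ellipticF (x : ℝ) : HasDerivAt (ellipticF k) (ellipticDelta k x)⁻¹ x :=
  ((continuous_inv_ellipticDelta k).integral_hasStrictDerivAt 0 x).hasDerivAt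

theorem analyticAt_ellipticF (x : ℝ) : AnalyticAt ℝ (ellipticF k) x :=
  analyticAt_of_eventually_hasDerivAt
    ((analyticAt_ellipticDelta k x).inv (ellipticDelta_pos k x).ne')
    (.of_forall (hasDerivAt_ellipticF k))

theorem ellipticF_zero : ellipticF k 0 = 0 := intervalIntegral.integral_same

theorem ellipticF_neg (x : ℝ) : ellipticF k (-x) = -ellipticF k x := by
  simpa [ellipticF, ellipticDelta_neg, intervalIntegral.integral_symm x 0] using
    intervalIntegral.integral_comp_neg (a := 0) (b := -x) fun θ => (ellipticDelta k θ)⁻¹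

theorem ellipticF_add_two_pi (x : ℝ) :
    ellipticF k (x + 2 * π) = ellipticF k x + ellipticF k (2 * π) := by
  simpa [ellipticF] using (inv_ellipticDelta_periodic k).intervalIntegral_add_eq_add 0 x
    (intervalIntegrable_inv_ellipticDelta k)

theorem ellipticF_strictMono : StrictMono (ellipticF k) :=
  strictMono_of_hasDerivAt_pos (hasDerivAt_ellipticF k) fun x => inv_pos.2 (ellipticDelta_pos k x)

theorem ellipticF_surjective : Function.Surjective (ellipticF k) :=
  Continuous.surjective
    (continuous_iff_continuousAt.2 fun x => (hasDerivAt_ellipticF k x).continuousAt)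
    ((inv_ellipticDelta_periodic k).tendsto_atTop_intervalIntegral_of_pos'
      (intervalIntegrable_inv_ellipticDelta k _ _) (fun x => inv_pos.2 (ellipticDelta_pos k x))
      two_pi_pos)
    ((inv_ellipticDelta_periodic k).tendsto_atBot_intervalIntegral_of_pos'
      (intervalIntegrable_inv_ellipticDelta k _ _) (fun x => inv_pos.2 (ellipticDelta_pos k x))
      two_pi_pos)

end EllipticIntegral

/-- The Jacobi amplitude for the imaginary modulus `i k`. -/
noncomputable def jacobiAm (k : ℝ) : ℝ ≃o ℝ :=
  ((ellipticF_strictMono k).orderIsoOfSurjective _ (ellipticF_surjective k)).symm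

/-- The Jacobi elliptic sine for the imaginary modulus `i k`. -/
noncomputable def jacobiSn (k t : ℝ) : ℝ := sin (jacobiAm k t)

section JacobiElliptic

variable (k : ℝ)

theorem ellipticF_jacobiAm (t : ℝ) : ellipticF k (jacobiAm k t) = t :=
  (jacobiAm k).symm_apply_apply t

theorem jacobiAm_ellipticF (x : ℝ) : jacobiAm k (ellipticF k x) = x :=
  (jacobiAm k).apply_symm_apply x

theorem hasDerivAt_jacobiAm (t : ℝ) :
    HasDerivAt (jacobiAm k) (ellipticDelta k (jacobiAm k t)) t := by
  simpa using HasDerivAt.of_local_left_inverse (jacobiAm k).continuous.continuousAt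
    (hasDerivAt_ellipticF k _) (inv_pos.2 (ellipticDelta_pos k _)).ne'
    (.of_forall (ellipticF_jacobiAm k))

theorem analyticAt_jacobiAm (t : ℝ) : AnalyticAt ℝ (jacobiAm k) t := by
  obtain ⟨x, rfl⟩ := ellipticF_surjective k t
  have deriv_ne : deriv (ellipticF k) x ≠ 0 := by
    rw [(hasDerivAt_ellipticF k x).deriv]
    exact (inv_pos.2 (ellipticDelta_pos k x)).ne'
  exact (analyticAt_comp_iff_of_deriv_ne_zero (analyticAt_ellipticF k x) deriv_ne).1
    (analyticAt_id.congr (.of_forall fun x => (jacobiAm_ellipticF k x).symm))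

theorem jacobiAm_neg (t : ℝ) : jacobiAm k (-t) = -jacobiAm k t :=
  (ellipticF_strictMono k).injective (by simp only [ellipticF_neg, ellipticF_jacobiAm])

theorem jacobiAm_add_period (t : ℝ) :
    jacobiAm k (t + ellipticF k (2 * π)) = jacobiAm k t + 2 * π :=
  (ellipticF_strictMono k).injective (by simp only [ellipticF_add_two_pi, ellipticF_jacobiAm])

theorem isDuffingSolution_jacobiSn : IsDuffingSolution (1 - k ^ 2) (2 * k ^ 2) (jacobiSn k)
    fun t => cos (jacobiAm k t) * ellipticDelta k (jacobiAm k t) where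
  hasDerivAt t := (hasDerivAt_jacobiAm k t).sin
  hasDerivAt_deriv t := by
    have delta_pos := ellipticDelta_pos k (jacobiAm k t)
    refine ((hasDerivAt_jacobiAm k t).cos.mul
      ((hasDerivAt_ellipticDelta k _).comp t (hasDerivAt_jacobiAm k t))).congr_deriv ?_
    have delta_sq := ellipticDelta_sq k (jacobiAm k t)
    have cos_sq := cos_sq' (jacobiAm k t)
    rw [Function.comp_apply, div_mul_cancel₀ _ delta_pos.ne', jacobiSn]
    linear_combination -sin (jacobiAm k t) * delta_sq + k ^ 2 * sin (jacobiAm k t) * cos_sq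

theorem analyticAt_jacobiSn (t : ℝ) : AnalyticAt ℝ (jacobiSn k) t :=
  analyticAt_sin.comp (analyticAt_jacobiAm k t)

theorem jacobiSn_neg (t : ℝ) : jacobiSn k (-t) = -jacobiSn k t := by
  rw [jacobiSn, jacobiAm_neg, sin_neg, jacobiSn]

theorem jacobiSn_periodic : Function.Periodic (jacobiSn k) (ellipticF k (2 * π)) := fun t => by
  rw [jacobiSn, jacobiAm_add_period, sin_add_two_pi, jacobiSn]

theorem jacobiSn_period_le {p : ℝ} (p_pos : 0 < p) (hp : Function.Periodic (jacobiSn k) p) :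
    ellipticF k (2 * π) ≤ p := by
  set t := ellipticF k (π / 2)
  have am_t : jacobiAm k t = π / 2 := jacobiAm_ellipticF k _
  have sin_am : sin (jacobiAm k (t + p)) = 1 := by
    simpa [jacobiSn, am_t] using hp t
  obtain ⟨n, hn⟩ := sin_eq_one_iff.1 sin_am
  have am_lt : jacobiAm k t < jacobiAm k (t + p) := (jacobiAm k).strictMono (by linarith)
  have n_pos : (1 : ℝ) ≤ n := by
    have : 0 < (n : ℝ) * (2 * π) := by linarith
    exact_mod_cast pos_of_mul_pos_left this two_pi_pos.le
  have am_le : jacobiAm k (t + ellipticF k (2 * π)) ≤ jacobiAm k (t + p) := by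
    rw [jacobiAm_add_period, am_t, ← hn]
    nlinarith [two_pi_pos]
  linarith [(jacobiAm k).le_iff_le.1 am_le]

end JacobiElliptic

/-- The angular frequency that turns the period of `jacobiSn k` into `2π`. -/
noncomputable def jacobiFreq (k : ℝ) : ℝ := ellipticF k (2 * π) / (2 * π)

/-- The Jacobi elliptic sine for the imaginary modulus `i k`, normalized to period `2π`. -/
noncomputable def snWave (k t : ℝ) : ℝ := jacobiSn k (jacobiFreq k * t)

section SnWave

variable (k : ℝ)

theorem jacobiFreq_pos : 0 < jacobiFreq k :=
  div_pos (ellipticF_zero k ▸ ellipticF_strictMono k two_pi_pos) two_pi_pos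

theorem jacobiFreq_eq_avg : jacobiFreq k = avg fun θ => (ellipticDelta k θ)⁻¹ := by
  rw [jacobiFreq, ellipticF, avg, one_div_mul_eq_div]

theorem jacobiFreq_mul_two_pi : jacobiFreq k * (2 * π) = ellipticF k (2 * π) :=
  div_mul_cancel₀ _ two_pi_pos.ne'

theorem jacobiFreq_mul_avg_comp_jacobiAm {φ : ℝ → ℝ} (φ_cont : Continuous φ) :
    jacobiFreq k * avg (fun t => φ (jacobiAm k (jacobiFreq k * t)))
      = avg fun θ => φ θ * (ellipticDelta k θ)⁻¹ := by
  have am_cont := (jacobiAm k).continuous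
  have delta_cont : Continuous (ellipticDelta k) := by unfold ellipticDelta; fun_prop
  have inv_delta_cont := continuous_inv_ellipticDelta k
  have change_of_variables := intervalIntegral.integral_comp_mul_deriv (a := 0) (b := 2 * π)
    (f := fun t => jacobiAm k (jacobiFreq k * t))
    (f' := fun t => jacobiFreq k * ellipticDelta k (jacobiAm k (jacobiFreq k * t)))
    (g := fun θ => φ θ * (ellipticDelta k θ)⁻¹)
    (fun t _ => hasDerivAt_comp_mul_left (hasDerivAt_jacobiAm k _))
    (by fun_prop) (by fun_prop)
  rw [mul_zero, jacobiFreq_mul_two_pi, jacobiAm_ellipticF, ← ellipticF_zero k,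
    jacobiAm_ellipticF] at change_of_variables
  rw [← avg_const_mul, avg, avg, ← change_of_variables, ellipticF_zero]
  congr! 3 with t
  have := (ellipticDelta_pos k (jacobiAm k (jacobiFreq k * t))).ne'
  rw [Function.comp_apply]
  field

theorem exists_modulus_avg_snWave_sq :
    ∃ k : ℝ, k ≠ 0 ∧ 1 - k ^ 2 = 6 * k ^ 2 * avg fun t => snWave k t ^ 2 := by
  -- The substitution `θ = jacobiAm k (jacobiFreq k * t)` makes the dependence on `k` explicit.
  let Φ : ℝ → ℝ := fun k => (1 - k ^ 2) * avg (fun θ => (ellipticDelta k θ)⁻¹)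
    - 6 * k ^ 2 * avg fun θ => sin θ ^ 2 * (ellipticDelta k θ)⁻¹
  have Φ_cont : Continuous Φ := by
    have avg_cont : Continuous fun k => avg fun θ => (ellipticDelta k θ)⁻¹ :=
      (intervalIntegral.continuous_parametric_intervalIntegral_of_continuous'
        continuous_uncurry_inv_ellipticDelta _ _).const_mul _
    have avg_sin_sq_cont : Continuous fun k => avg fun θ => sin θ ^ 2 * (ellipticDelta k θ)⁻¹ :=
      (intervalIntegral.continuous_parametric_intervalIntegral_of_continuous'
        (((continuous_sin.comp continuous_snd).pow 2).mul continuous_uncurry_inv_ellipticDelta)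
        _ _).const_mul _
    fun_prop
  have Φ_zero : 0 < Φ 0 := by
    simpa [Φ, ← jacobiFreq_eq_avg] using jacobiFreq_pos 0
  have Φ_one : Φ 1 ≤ 0 := by
    have : 0 ≤ avg fun θ => sin θ ^ 2 * (ellipticDelta 1 θ)⁻¹ :=
      avg_nonneg fun θ => mul_nonneg (sq_nonneg _) (inv_pos.2 (ellipticDelta_pos 1 θ)).le
    simp only [Φ]
    linarith
  obtain ⟨k, -, hk⟩ := intermediate_value_Icc' zero_le_one Φ_cont.continuousOn ⟨Φ_one, Φ_zero.le⟩
  refine ⟨k, fun k_zero => Φ_zero.ne' (k_zero ▸ hk), ?_⟩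
  simp only [Φ, ← jacobiFreq_eq_avg] at hk
  refine mul_left_cancel₀ (jacobiFreq_pos k).ne' ?_
  unfold snWave jacobiSn
  linear_combination hk - 6 * k ^ 2 * jacobiFreq_mul_avg_comp_jacobiAm k (continuous_sin.pow 2)

theorem isDuffingSolution_snWave :
    IsDuffingSolution (jacobiFreq k ^ 2 * (1 - k ^ 2)) (jacobiFreq k ^ 2 * (2 * k ^ 2)) (snWave k)
      fun t => jacobiFreq k * (cos (jacobiAm k (jacobiFreq k * t))
        * ellipticDelta k (jacobiAm k (jacobiFreq k * t))) := by
  unfold snWave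
  simpa using (isDuffingSolution_jacobiSn k).rescale one_ne_zero (jacobiFreq k)

theorem analyticAt_snWave (t : ℝ) : AnalyticAt ℝ (snWave k) t :=
  (analyticAt_jacobiSn k _).comp (analyticAt_const.mul analyticAt_id)

theorem snWave_neg (t : ℝ) : snWave k (-t) = -snWave k t := by
  rw [snWave, mul_neg, jacobiSn_neg, snWave]

theorem snWave_periodic : Function.Periodic (snWave k) (2 * π) := fun t => by
  rw [snWave, mul_add, jacobiFreq_mul_two_pi, jacobiSn_periodic, snWave]

theorem two_pi_le_of_snWave_periodic {p : ℝ} (p_pos : 0 < p)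
    (hp : Function.Periodic (snWave k) p) : 2 * π ≤ p := by
  have freq_pos := jacobiFreq_pos k
  refine le_of_mul_le_mul_left ?_ freq_pos
  rw [jacobiFreq_mul_two_pi]
  refine jacobiSn_period_le k (by positivity) fun t => ?_
  have := hp (t / jacobiFreq k)
  simpa [snWave, mul_add, mul_div_cancel₀ t freq_pos.ne'] using this

theorem snWave_ne_zero : snWave k ≠ 0 := fun eq_zero => by
  have : 2 * π ≤ π := two_pi_le_of_snWave_periodic k pi_pos (eq_zero ▸ fun _ => rfl)
  linarith [pi_pos]

end SnWave

theorem stmt_0 :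
    ∃ g : ℝ → ℝ,
      (∀ t : ℝ, AnalyticAt ℝ g t) ∧
      (∀ t : ℝ, g (-t) = -g t) ∧
      Function.Periodic g (2 * π) ∧
      (∀ p : ℝ, 0 < p → Function.Periodic g p → 2 * π ≤ p) ∧
      g ≠ 0 ∧
      (∀ t : ℝ, deriv (deriv g) t
          + (avg (fun s => g s ^ 4) + 3 * avg (fun s => g s ^ 2) ^ 2)
            * (3 * avg (fun s => g s ^ 2) * g t + g t ^ 3) = 0) ∧
      (∀ h : ℝ → ℝ, ContDiff ℝ 2 h → (∀ t : ℝ, h (-t) = -h t) →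
        Function.Periodic h (2 * π) →
        (∀ t : ℝ, deriv (deriv h) t
            + 3 * (avg (fun s => g s ^ 4) + 3 * avg (fun s => g s ^ 2) ^ 2)
              * (avg (fun s => g s ^ 2) + g t ^ 2) * h t
            + 6 * (avg (fun s => g s ^ 4) + 3 * avg (fun s => g s ^ 2) ^ 2)
              * g t * avg (fun s => g s * h s)
            + 4 * (avg (fun s => g s ^ 3 * h s)
                + 3 * avg (fun s => g s ^ 2) * avg (fun s => g s * h s))
              * (3 * avg (fun s => g s ^ 2) * g t + g t ^ 3) = 0) →
        h = 0) := by
  obtain ⟨k, k_ne, hk⟩ := exists_modulus_avg_snWave_sq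
  have freq_pos := jacobiFreq_pos k
  obtain ⟨V, V_ne, hg⟩ := (isDuffingSolution_snWave k).exists_const_mul_nonlocal (by positivity)
    (by linear_combination jacobiFreq k ^ 2 * hk) (snWave_periodic k) (snWave_ne_zero k)
  have g_odd : Function.Odd fun t => V * snWave k t := fun t => by simp only [snWave_neg, mul_neg]
  have g_periodic : Function.Periodic (fun t => V * snWave k t) (2 * π) := fun t => by
    simp only [snWave_periodic k t]
  have g_ne : (fun t => V * snWave k t) ≠ 0 := fun g_zero => snWave_ne_zero k <|
    funext fun t => (mul_eq_zero.1 (congrFun g_zero t)).resolve_left V_ne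
  refine ⟨fun t => V * snWave k t, fun t => analyticAt_const.mul (analyticAt_snWave k t), g_odd,
    g_periodic, fun p p_pos hp => two_pi_le_of_snWave_periodic k p_pos fun t =>
      mul_left_cancel₀ V_ne (hp t), g_ne, fun t => ?_, fun h h_smooth h_odd h_periodic hh => ?_⟩
  · have duffing := hg.deriv_deriv_add t
    unfold nonlocalCoeff at duffing
    linear_combination duffing
  · have h_odd : Function.Odd h := h_odd
    refine eq_zero_of_nonlocalForcing hg g_odd.map_zero g_ne g_periodic
      ⟨fun t => (h_smooth.differentiable two_ne_zero t).hasDerivAt, fun t =>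
        (h_smooth.differentiable_deriv_two t).hasDerivAt.congr_deriv ?_⟩ h_odd.map_zero h_periodic
    simp only [nonlocalForcing, duffingPotential, nonlocalCoeff]
    linear_combination hh t
end

section
/- Let q : ℝ → ℝ be continuous, even and 2π-periodic, and let ū, v̄ : ℝ → ℝ be the solutions of h'' + q h = 0 with ū(0) = 1, ū'(0) = 0 and v̄(0) = 0, v̄'(0) = 1. Assume ū is 2π-periodic and that there is ρ ≠ 0 with v̄(t + 2π) − v̄(t) = ρ ū(t) for all t. Then for every continuous, odd, 2π-periodic f : ℝ → ℝ, the function H(t) := (∫₀^t f(s)ū(s) ds + (1/ρ)∫₀^{2π} f(s)v̄(s) ds)·v̄(t) − (∫₀^t f(s)v̄(s) ds)·ū(t) is the unique C², odd, 2π-periodic function satisfying H''(t) + q(t)H(t) = f(t) for all t ∈ ℝ. -/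
open Real

/-- The Green-operator integral formula
`H(t) = (∫₀ᵗ f ū + (1/ρ)∫₀^{2π} f v̄) v̄(t) − (∫₀ᵗ f v̄) ū(t)`. -/
noncomputable def greenH (ρ : ℝ) (f u v : ℝ → ℝ) : ℝ → ℝ := fun t =>
  ((∫ s in (0:ℝ)..t, f s * u s) + (1 / ρ) * ∫ s in (0:ℝ)..(2 * π), f s * v s) * v t
    - (∫ s in (0:ℝ)..t, f s * v s) * u t

/-!
The Wronskian of two homogeneous solutions is constant, so the homogeneous solutions are exactly the
combinations of `u` and `v`; as `q` is even, reflection then shows that `u` is even and `v` odd.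
Variation of parameters gives a solution of the forced equation for every choice of the free
constant `c`, and this solution is odd when the forcing term is. As `u f` is odd and periodic, it
integrates to `0` over a period; hence translating by the period `T`, where
`v (t + T) = v t + ρ u t`, changes the solution by `(ρ c - ∫₀ᵀ v f) u`, which singles out the value
of `c`. For uniqueness, an odd homogeneous solution is a multiple of `v`, and `v T = ρ ≠ 0 = v 0`.
-/

open Function intervalIntegral

lemma periodic_of_even_of_odd_of_translate {α R : Type*} [AddCommGroup α] [CommRing R] [IsDomain R]
    {u v : α → R} {ρ : R} {T : α} (hu : u.Even) (hv : v.Odd) (hρ : ρ ≠ 0)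
    (hvT : ∀ t, v (t + T) - v t = ρ * u t) : Periodic u T := by
  intro t
  have h := hvT (-(t + T))
  rw [neg_add, neg_add_cancel_right, ← neg_add, hv, hv, hu] at h
  exact mul_left_cancel₀ hρ (by linear_combination hvT t - h)

variable {E : Type*} [NormedAddCommGroup E] [NormedSpace ℝ E]

section Integral

variable {g : ℝ → E}

lemma integral_zero_neg_of_odd (hg : g.Odd) (t : ℝ) :
    ∫ s in (0 : ℝ)..-t, g s = ∫ s in (0 : ℝ)..t, g s := by
  have h := integral_comp_neg (a := 0) (b := t) g
  simp only [hg.eq, intervalIntegral.integral_neg, neg_zero] at h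
  rw [integral_symm, ← h, neg_neg]

lemma integral_zero_neg_of_even (hg : g.Even) (t : ℝ) :
    ∫ s in (0 : ℝ)..-t, g s = -∫ s in (0 : ℝ)..t, g s := by
  have h := integral_comp_neg (a := 0) (b := t) g
  simp only [hg.eq, neg_zero] at h
  rw [integral_symm, ← h]

lemma integral_zero_period_eq_zero_of_odd {T : ℝ} (hg : g.Odd) (hgp : Periodic g T) :
    ∫ s in (0 : ℝ)..T, g s = 0 := by
  have h := hgp.intervalIntegral_add_eq (-T) 0
  rw [neg_add_cancel, zero_add, integral_symm, integral_zero_neg_of_odd hg] at h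
  have : IsAddTorsionFree E := .of_isTorsionFree ℝ E
  exact neg_eq_self.mp h

lemma integral_zero_add_eq_add_integral_comp_add
    (hg : ∀ a b, IntervalIntegrable g MeasureTheory.volume a b) (t T : ℝ) :
    ∫ s in (0 : ℝ)..t + T, g s = (∫ s in (0 : ℝ)..T, g s) + ∫ s in (0 : ℝ)..t, g (s + T) := by
  rw [integral_comp_add_right, zero_add, integral_add_adjacent_intervals (hg _ _) (hg _ _)]

lemma contDiff_one_integral_of_continuous [CompleteSpace E] (hg : Continuous g) (a : ℝ) :
    ContDiff ℝ 1 fun t => ∫ s in a..t, g s :=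
  contDiff_one_iff_deriv.mpr
    ⟨fun t => (hg.integral_hasStrictDerivAt a t).hasDerivAt.differentiableAt,
      hg.congr fun t => (hg.integral_hasStrictDerivAt a t).hasDerivAt.deriv.symm⟩

end Integral

/-- `y` is a `C²` solution of the forced Hill equation `y'' + q y = f`, with values in a normed
space; no periodicity of `q` is built in. The homogeneous equation is the case `f = 0`. -/
structure IsHillSolution_s3 (q : ℝ → ℝ) (f y : ℝ → E) : Prop where
  contDiff : ContDiff ℝ 2 y
  ode : ∀ t, deriv (deriv y) t + q t • y t = f t

/-- `u` and `v` are the fundamental solutions of `y'' + q y = 0` normalized at `0`; they are the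
`ū` and `v̄` of the theorem. -/
structure IsNormalizedFundamentalPair (q u v : ℝ → ℝ) : Prop where
  fst : IsHillSolution_s3 q 0 u
  snd : IsHillSolution_s3 q 0 v
  fst_zero : u 0 = 1
  deriv_fst_zero : deriv u 0 = 0
  snd_zero : v 0 = 0
  deriv_snd_zero : deriv v 0 = 1

/-- The solution `t ↦ v(t) (∫₀ᵗ u f + c) - u(t) ∫₀ᵗ v f` of `y'' + q y = f` obtained from a
fundamental pair `u`, `v` by variation of parameters. The free constant `c`, its derivative at `0`,
is the only one kept: the value at `0` is `0`, as for every odd solution. -/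
noncomputable def variationOfParameters (u v : ℝ → ℝ) (f : ℝ → E) (c : E) (t : ℝ) : E :=
  v t • ((∫ s in (0 : ℝ)..t, u s • f s) + c) - u t • ∫ s in (0 : ℝ)..t, v s • f s

variable {q u v : ℝ → ℝ} {f g y z : ℝ → E}

namespace IsHillSolution_s3

lemma hasDerivAt (hy : IsHillSolution_s3 q f y) (t : ℝ) : HasDerivAt y (deriv y t) t :=
  (hy.contDiff.differentiable two_ne_zero t).hasDerivAt

lemma hasDerivAt_deriv (hy : IsHillSolution_s3 q f y) (t : ℝ) :
    HasDerivAt (deriv y) (f t - q t • y t) t :=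
  eq_sub_of_add_eq (hy.ode t) ▸ (hy.contDiff.differentiable_deriv_two t).hasDerivAt

lemma of_hasDerivAt {y' : ℝ → E} (hy' : ContDiff ℝ 1 y') (hy : ∀ t, HasDerivAt y (y' t) t)
    (hode : ∀ t, HasDerivAt y' (f t - q t • y t) t) : IsHillSolution_s3 q f y := by
  have hderiv : deriv y = y' := funext fun t => (hy t).deriv
  refine ⟨?_, fun t => by rw [hderiv, (hode t).deriv, sub_add_cancel]⟩
  rw [← one_add_one_eq_two, contDiff_succ_iff_deriv, hderiv]
  exact ⟨fun t => (hy t).differentiableAt, by simp, hy'⟩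

lemma sub (hy : IsHillSolution_s3 q f y) (hz : IsHillSolution_s3 q g z) :
    IsHillSolution_s3 q (f - g) (y - z) :=
  of_hasDerivAt (y' := deriv y - deriv z)
    ((hy.contDiff.deriv' (n := 1)).sub (hz.contDiff.deriv' (n := 1)))
    (fun t => (hy.hasDerivAt t).sub (hz.hasDerivAt t))
    (fun t => ((hy.hasDerivAt_deriv t).sub (hz.hasDerivAt_deriv t)).congr_deriv
      (by simp only [Pi.sub_apply]; module))

lemma comp_neg (hq : q.Even) (hy : IsHillSolution_s3 q f y) :
    IsHillSolution_s3 q (fun t => f (-t)) (fun t => y (-t)) where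
  contDiff := hy.contDiff.comp contDiff_neg
  ode t := by
    have hderiv : (deriv fun s => y (-s)) = fun s => -deriv y (-s) := funext (deriv_comp_neg y)
    rw [hderiv, deriv.fun_neg, deriv_comp_neg, neg_neg, ← hq t, hy.ode]

lemma wronskian_eq (hu : IsHillSolution_s3 q 0 u) (hy : IsHillSolution_s3 q 0 y) (t : ℝ) :
    u t • deriv y t - deriv u t • y t = u 0 • deriv y 0 - deriv u 0 • y 0 := by
  have hderiv (s : ℝ) : HasDerivAt (fun t => u t • deriv y t - deriv u t • y t) 0 s := by
    refine (((hu.hasDerivAt s).smul (hy.hasDerivAt_deriv s)).sub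
      ((hu.hasDerivAt_deriv s).smul (hy.hasDerivAt s))).congr_deriv ?_
    simp only [Pi.zero_apply, smul_eq_mul]
    module
  exact is_const_of_deriv_eq_zero (fun s => (hderiv s).differentiableAt)
    (fun s => (hderiv s).deriv) t 0

end IsHillSolution_s3

namespace IsNormalizedFundamentalPair

lemma wronskian_eq_one (h : IsNormalizedFundamentalPair q u v) (t : ℝ) :
    u t * deriv v t - deriv u t * v t = 1 := by
  simpa [h.fst_zero, h.deriv_fst_zero, h.snd_zero, h.deriv_snd_zero]
    using h.fst.wronskian_eq h.snd t

lemma eq_smul_add_smul (h : IsNormalizedFundamentalPair q u v) (hy : IsHillSolution_s3 q 0 y)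
    (t : ℝ) : y t = u t • y 0 + v t • deriv y 0 := by
  have huy : u t • deriv y t - deriv u t • y t = deriv y 0 := by
    simpa [h.fst_zero, h.deriv_fst_zero] using h.fst.wronskian_eq hy t
  have hvy : v t • deriv y t - deriv v t • y t = -y 0 := by
    simpa [h.snd_zero, h.deriv_snd_zero] using h.snd.wronskian_eq hy t
  linear_combination (norm := module) v t • huy - u t • hvy - h.wronskian_eq_one t • y t

lemma even_fst (h : IsNormalizedFundamentalPair q u v) (hq : q.Even) : u.Even := fun t => by
  simpa [deriv_comp_neg, h.fst_zero, h.deriv_fst_zero]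
    using h.eq_smul_add_smul (h.fst.comp_neg hq) t

lemma odd_snd (h : IsNormalizedFundamentalPair q u v) (hq : q.Even) : v.Odd := fun t => by
  simpa [deriv_comp_neg, h.snd_zero, h.deriv_snd_zero]
    using h.eq_smul_add_smul (h.snd.comp_neg hq) t

lemma eq_zero_of_odd_of_periodic {T : ℝ} (h : IsNormalizedFundamentalPair q u v) (hvT : v T ≠ 0)
    (hy : IsHillSolution_s3 q 0 y) (hyo : y.Odd) (hyp : Periodic y T) : y = 0 := by
  have : IsAddTorsionFree E := .of_isTorsionFree ℝ E
  have hy_eq (t : ℝ) : y t = v t • deriv y 0 := by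
    simpa [hyo.map_zero] using h.eq_smul_add_smul hy t
  have hslope : deriv y 0 = 0 := by
    have hyT : v T • deriv y 0 = 0 := by rw [← hy_eq, hyp.eq, hyo.map_zero]
    exact (smul_eq_zero.mp hyT).resolve_left hvT
  funext t
  rw [hy_eq, hslope, smul_zero, Pi.zero_apply]

lemma isHillSolution_variationOfParameters [CompleteSpace E]
    (h : IsNormalizedFundamentalPair q u v) (hf : Continuous f) (c : E) :
    IsHillSolution_s3 q f (variationOfParameters u v f c) := by
  have huf := h.fst.contDiff.continuous.smul hf
  have hvf := h.snd.contDiff.continuous.smul hf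
  have hA (t : ℝ) := (huf.integral_hasStrictDerivAt 0 t).hasDerivAt.add_const c
  have hB (t : ℝ) := (hvf.integral_hasStrictDerivAt 0 t).hasDerivAt
  refine .of_hasDerivAt (y' := fun t => deriv v t • ((∫ s in (0 : ℝ)..t, u s • f s) + c)
    - deriv u t • ∫ s in (0 : ℝ)..t, v s • f s) ?_ (fun t => ?_) (fun t => ?_)
  · exact ((h.snd.contDiff.deriv' (n := 1)).smul
        ((contDiff_one_integral_of_continuous huf 0).add contDiff_const)).sub
      ((h.fst.contDiff.deriv' (n := 1)).smul (contDiff_one_integral_of_continuous hvf 0))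
  · refine (((h.snd.hasDerivAt t).smul (hA t)).sub
      ((h.fst.hasDerivAt t).smul (hB t))).congr_deriv ?_
    simp only [Pi.smul_apply']
    module
  · refine (((h.snd.hasDerivAt_deriv t).smul (hA t)).sub
      ((h.fst.hasDerivAt_deriv t).smul (hB t))).congr_deriv ?_
    simp only [variationOfParameters, Pi.zero_apply, Pi.smul_apply']
    linear_combination (norm := module) h.wronskian_eq_one t • f t

end IsNormalizedFundamentalPair

lemma odd_variationOfParameters (hu : u.Even) (hv : v.Odd) (hf : f.Odd) (c : E) :
    (variationOfParameters u v f c).Odd := fun t => by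
  have hA := integral_zero_neg_of_odd (hu.smul_odd hf) t
  have hB := integral_zero_neg_of_even (hv.smul_odd hf) t
  simp only [Pi.smul_apply'] at hA hB
  simp only [variationOfParameters, hA, hB, hu.eq, hv.eq]
  module

lemma periodic_variationOfParameters {ρ T : ℝ}
    (hui : ∀ a b, IntervalIntegrable (fun s => u s • f s) MeasureTheory.volume a b)
    (hvi : ∀ a b, IntervalIntegrable (fun s => v s • f s) MeasureTheory.volume a b)
    (hup : Periodic u T) (hfp : Periodic f T) (hρ : ρ ≠ 0)
    (hvT : ∀ t, v (t + T) - v t = ρ * u t) (huf : ∫ s in (0 : ℝ)..T, u s • f s = 0) :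
    Periodic (variationOfParameters u v f (ρ⁻¹ • ∫ s in (0 : ℝ)..T, v s • f s)) T := by
  intro t
  have hv_shift (s : ℝ) : v (s + T) = v s + ρ * u s := by linear_combination hvT s
  have hA : ∫ s in (0 : ℝ)..t + T, u s • f s = ∫ s in (0 : ℝ)..t, u s • f s := by
    rw [integral_zero_add_eq_add_integral_comp_add hui, huf, zero_add]
    simp only [hup _, hfp _]
  have hB : ∫ s in (0 : ℝ)..t + T, v s • f s = (∫ s in (0 : ℝ)..T, v s • f s)
      + ((∫ s in (0 : ℝ)..t, v s • f s) + ρ • ∫ s in (0 : ℝ)..t, u s • f s) := by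
    have hui_smul : IntervalIntegrable (fun s => ρ • u s • f s) MeasureTheory.volume 0 t :=
      (hui 0 t).smul ρ
    rw [integral_zero_add_eq_add_integral_comp_add hvi, ← integral_smul,
      ← integral_add (hvi 0 t) hui_smul]
    simp only [hfp _, hv_shift, add_smul, mul_smul]
  simp only [variationOfParameters, hA, hB, hup t, hv_shift]
  match_scalars <;> field_simp <;> ring

theorem stmt_3_general [CompleteSpace E] {ρ T : ℝ} (h : IsNormalizedFundamentalPair q u v)
    (hq : q.Even) (hρ : ρ ≠ 0) (hvT : ∀ t, v (t + T) - v t = ρ * u t)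
    (hf : Continuous f) (hfo : f.Odd) (hfp : Periodic f T) :
    let H := variationOfParameters u v f (ρ⁻¹ • ∫ s in (0 : ℝ)..T, v s • f s)
    (IsHillSolution_s3 q f H ∧ H.Odd ∧ Periodic H T) ∧
      ∀ G, IsHillSolution_s3 q f G → G.Odd → Periodic G T → G = H := by
  intro H
  have hue := h.even_fst hq
  have hvo := h.odd_snd hq
  have hup := periodic_of_even_of_odd_of_translate hue hvo hρ hvT
  have hH : IsHillSolution_s3 q f H := h.isHillSolution_variationOfParameters hf _
  have hHo : H.Odd := odd_variationOfParameters hue hvo hfo _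
  have huf : ∫ s in (0 : ℝ)..T, u s • f s = 0 :=
    integral_zero_period_eq_zero_of_odd (hue.smul_odd hfo) fun s => by
      simp only [hup s, hfp s]
  have hHp : Periodic H T := periodic_variationOfParameters
    (h.fst.contDiff.continuous.smul hf).intervalIntegrable
    (h.snd.contDiff.continuous.smul hf).intervalIntegrable hup hfp hρ hvT huf
  refine ⟨⟨hH, hHo, hHp⟩, fun G hG hGo hGp => sub_eq_zero.mp ?_⟩
  have hv_period : v T ≠ 0 := by
    have hv_eq : v T = ρ := by simpa [h.fst_zero, h.snd_zero] using hvT 0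
    exact hv_eq ▸ hρ
  have hGH_odd : (G - H).Odd := fun t => by
    simp only [Pi.sub_apply, hGo.eq, hHo.eq, neg_sub_neg, neg_sub]
  exact h.eq_zero_of_odd_of_periodic hv_period (sub_self f ▸ hG.sub hH) hGH_odd (hGp.sub hHp)

lemma greenH_eq_variationOfParameters (ρ : ℝ) (f u v : ℝ → ℝ) :
    greenH ρ f u v =
      variationOfParameters u v f (ρ⁻¹ • ∫ s in (0 : ℝ)..2 * π, v s • f s) := by
  funext t
  simp only [greenH, variationOfParameters, smul_eq_mul, one_div, mul_comm]

theorem stmt_3 (q u v : ℝ → ℝ)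
    (hq : Continuous q) (hqe : ∀ t : ℝ, q (-t) = q t) (hqp : Function.Periodic q (2 * π))
    (hu : ContDiff ℝ 2 u) (hv : ContDiff ℝ 2 v)
    (huode : ∀ t : ℝ, deriv (deriv u) t + q t * u t = 0)
    (hvode : ∀ t : ℝ, deriv (deriv v) t + q t * v t = 0)
    (hu0 : u 0 = 1) (hu0' : deriv u 0 = 0) (hv0 : v 0 = 0) (hv0' : deriv v 0 = 1)
    (hup : Function.Periodic u (2 * π))
    (ρ : ℝ) (hρ : ρ ≠ 0) (hρv : ∀ t : ℝ, v (t + 2 * π) - v t = ρ * u t)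
    (f : ℝ → ℝ) (hf : Continuous f) (hfo : ∀ t : ℝ, f (-t) = -f t)
    (hfp : Function.Periodic f (2 * π)) :
    (ContDiff ℝ 2 (greenH ρ f u v) ∧
      (∀ t : ℝ, greenH ρ f u v (-t) = -greenH ρ f u v t) ∧
      Function.Periodic (greenH ρ f u v) (2 * π) ∧
      (∀ t : ℝ, deriv (deriv (greenH ρ f u v)) t + q t * greenH ρ f u v t = f t)) ∧
    (∀ G : ℝ → ℝ, ContDiff ℝ 2 G → (∀ t : ℝ, G (-t) = -G t) →
      Function.Periodic G (2 * π) →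
      (∀ t : ℝ, deriv (deriv G) t + q t * G t = f t) →
      G = greenH ρ f u v) := by
  rw [greenH_eq_variationOfParameters]
  have ⟨⟨hH, hHo, hHp⟩, hunique⟩ :=
    stmt_3_general ⟨⟨hu, huode⟩, ⟨hv, hvode⟩, hu0, hu0', hv0, hv0'⟩ hqe hρ hρv hf hfo hfp
  exact ⟨⟨hH.contDiff, hHo, hHp, hH.ode⟩, fun G hG hGo hGp hGode => hunique G ⟨hG, hGode⟩ hGo hGp⟩
end
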